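/- For smooth functions u : ℝ² → ℝ which are 2π-periodic in the second variable and compactly supported in the first variable, set D′(u) = ∫_{ℝ×[0,2π]} ( 4 (∂_s∂_t u)² − 2 (∂_s u)² + 2 (∂_t u)² ). Then D′ is indefinite: there exist such functions u, v with D′(u) > 0 and D′(v) < 0. -/

import Mathlib

open MeasureTheory Real

/-- Partial derivative of `u : ℝ² → ℝ` in the first coordinate. -/
noncomputable def pdS (u : ℝ × ℝ → ℝ) (x : ℝ × ℝ) : ℝ := fderiv ℝ u x (1, 0)

/-- Partial derivative of `u : ℝ² → ℝ` in the second coordinate. -/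
noncomputable def pdT (u : ℝ × ℝ → ℝ) (x : ℝ × ℝ) : ℝ := fderiv ℝ u x (0, 1)

/-!
On a product `u(s, t) = f(s) g(t)` the functional factors into one-dimensional `L²` norms,
`D′(u) = ‖f'‖² (4 ‖g'‖² - 2 ‖g‖²) + 2 ‖f‖² ‖g'‖²`. The only negative contribution comes from
`‖g‖²`, so for a bump function `f` the constant Fourier mode `g = 1` makes `D′` negative, while
already the first mode `g = cos`, for which `‖g'‖ = ‖g‖`, makes it positive.
-/

/-- The second variation `D′(u) = ∫_{ℝ×[0,2π]} (4(∂ₛ∂ₜu)² − 2(∂ₛu)² + 2(∂ₜu)²)` of the tube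
congruence, up to the overall sign. -/
noncomputable def secondVariation (u : ℝ × ℝ → ℝ) : ℝ :=
  ∫ x in (Set.univ ×ˢ Set.Icc (0 : ℝ) (2 * π) : Set (ℝ × ℝ)),
    (4 * (pdS (pdT u) x) ^ 2 - 2 * (pdS u x) ^ 2 + 2 * (pdT u x) ^ 2)

/-- The functions on which the second variation is tested: smooth functions on the cylinder,
encoded as `2π`-periodic in the second variable, with compact support along its axis. -/
structure IsTestFunction (u : ℝ × ℝ → ℝ) : Prop where
  contDiff : ContDiff ℝ (⊤ : ℕ∞) u
  periodic : ∀ x : ℝ × ℝ, u (x.1, x.2 + 2 * π) = u x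
  exists_isCompact : ∃ K : Set ℝ, IsCompact K ∧ ∀ x : ℝ × ℝ, x.1 ∉ K → u x = 0

/-- The function `(s, t) ↦ f s * g t` of separated variables, that is, the tensor product of
`f` and `g`. -/
def separated (f g : ℝ → ℝ) (x : ℝ × ℝ) : ℝ := f x.1 * g x.2

section Separated

variable {f g : ℝ → ℝ}

theorem isTestFunction_separated (hf : ContDiff ℝ (⊤ : ℕ∞) f) (hfc : HasCompactSupport f)
    (hg : ContDiff ℝ (⊤ : ℕ∞) g) (hgp : Function.Periodic g (2 * π)) :
    IsTestFunction (separated f g) where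
  contDiff := (hf.comp contDiff_fst).mul (hg.comp contDiff_snd)
  periodic x := congrArg (f x.1 * ·) (hgp x.2)
  exists_isCompact :=
    ⟨tsupport f, hfc, fun _ hx => mul_eq_zero_of_left (image_eq_zero_of_notMem_tsupport hx) _⟩

theorem hasFDerivAt_separated {x : ℝ × ℝ} (hf : DifferentiableAt ℝ f x.1)
    (hg : DifferentiableAt ℝ g x.2) :
    HasFDerivAt (separated f g)
      (f x.1 • (deriv g x.2 • ContinuousLinearMap.snd ℝ ℝ ℝ) +
        g x.2 • (deriv f x.1 • ContinuousLinearMap.fst ℝ ℝ ℝ)) x :=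
  (hf.hasDerivAt.comp_hasFDerivAt x hasFDerivAt_fst).mul
    (hg.hasDerivAt.comp_hasFDerivAt x hasFDerivAt_snd)

theorem pdS_separated (hf : Differentiable ℝ f) (hg : Differentiable ℝ g) :
    pdS (separated f g) = separated (deriv f) g := by
  ext x
  simp [pdS, separated, (hasFDerivAt_separated (hf x.1) (hg x.2)).fderiv, mul_comm]

theorem pdT_separated (hf : Differentiable ℝ f) (hg : Differentiable ℝ g) :
    pdT (separated f g) = separated f (deriv g) := by
  ext x
  simp [pdT, separated, (hasFDerivAt_separated (hf x.1) (hg x.2)).fderiv]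

theorem separated_sq (f g : ℝ → ℝ) (x : ℝ × ℝ) :
    separated f g x ^ 2 = f x.1 ^ 2 * g x.2 ^ 2 :=
  mul_pow _ _ _

theorem integrableOn_separated_sq {S T : Set ℝ} (hf : IntegrableOn (fun s => f s ^ 2) S)
    (hg : IntegrableOn (fun t => g t ^ 2) T) :
    IntegrableOn (fun x => separated f g x ^ 2) (S ×ˢ T) := by
  rw [IntegrableOn, Measure.volume_eq_prod, ← Measure.prod_restrict]
  simpa only [separated_sq] using hf.mul_prod hg

theorem setIntegral_separated_sq (f g : ℝ → ℝ) (S T : Set ℝ) :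
    ∫ x in S ×ˢ T, separated f g x ^ 2 = (∫ s in S, f s ^ 2) * ∫ t in T, g t ^ 2 := by
  simp only [separated_sq]
  exact setIntegral_prod_mul (fun s => f s ^ 2) (fun t => g t ^ 2) S T

theorem secondVariation_separated (hfd : Differentiable ℝ f) (hf : MemLp f 2)
    (hf' : MemLp (deriv f) 2) (hg : Differentiable ℝ g) (hg' : Differentiable ℝ (deriv g)) :
    secondVariation (separated f g) =
      (∫ s, deriv f s ^ 2) *
          (4 * (∫ t in Set.Icc 0 (2 * π), deriv g t ^ 2) - 2 * ∫ t in Set.Icc 0 (2 * π), g t ^ 2) +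
        2 * (∫ s, f s ^ 2) * ∫ t in Set.Icc 0 (2 * π), deriv g t ^ 2 := by
  have integrable_product {h k : ℝ → ℝ} (hh : MemLp h 2) (hk : Continuous k) :
      IntegrableOn (fun x => separated h k x ^ 2) (Set.univ ×ˢ Set.Icc 0 (2 * π)) :=
    integrableOn_separated_sq hh.integrable_sq.integrableOn (hk.pow 2).integrableOn_Icc
  have h_st := (integrable_product hf' hg'.continuous).const_mul 4
  have h_s := (integrable_product hf' hg.continuous).const_mul 2
  have h_t := (integrable_product hf hg'.continuous).const_mul 2
  rw [secondVariation, pdT_separated hfd hg, pdS_separated hfd hg, pdS_separated hfd hg',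
    integral_add (by exact h_st.sub h_s) h_t, integral_sub h_st h_s]
  simp only [integral_const_mul, setIntegral_separated_sq, setIntegral_univ]
  ring

theorem secondVariation_separated_one (hfd : Differentiable ℝ f) (hf : MemLp f 2)
    (hf' : MemLp (deriv f) 2) :
    secondVariation (separated f 1) = -(4 * π * ∫ s, deriv f s ^ 2) := by
  have h_one : ∫ t in Set.Icc 0 (2 * π), (1 : ℝ → ℝ) t ^ 2 = 2 * π := by
    simp [two_pi_pos.le]
  have h_deriv : ∫ t in Set.Icc 0 (2 * π), deriv (1 : ℝ → ℝ) t ^ 2 = 0 := by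
    simp [deriv_one]
  rw [secondVariation_separated hfd hf hf' differentiable_one (by simp [deriv_one]), h_one, h_deriv]
  ring

theorem secondVariation_separated_cos (hfd : Differentiable ℝ f) (hf : MemLp f 2)
    (hf' : MemLp (deriv f) 2) :
    secondVariation (separated f cos) = 2 * π * ((∫ s, deriv f s ^ 2) + ∫ s, f s ^ 2) := by
  have h_sin : ∫ t in Set.Icc 0 (2 * π), deriv cos t ^ 2 = π := by
    rw [integral_Icc_eq_integral_Ioc, ← intervalIntegral.integral_of_le two_pi_pos.le]
    simp [integral_sin_sq]
  have h_cos : ∫ t in Set.Icc 0 (2 * π), cos t ^ 2 = π := by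
    rw [integral_Icc_eq_integral_Ioc, ← intervalIntegral.integral_of_le two_pi_pos.le]
    simp [integral_cos_sq]
  rw [secondVariation_separated hfd hf hf' differentiable_cos (by simp), h_sin, h_cos]
  ring

theorem integral_deriv_sq_pos (hf : ContDiff ℝ 1 f) (hfc : HasCompactSupport f) (hf0 : f ≠ 0) :
    0 < ∫ s, deriv f s ^ 2 := by
  obtain ⟨s, hs⟩ : ∃ s, deriv f s ≠ 0 := by
    by_contra! h
    obtain ⟨a, ha⟩ := (Set.ne_univ_iff_exists_notMem _).1 (IsCompact.ne_univ hfc)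
    refine hf0 (funext fun b => ?_)
    rw [is_const_of_deriv_eq_zero (hf.differentiable one_ne_zero) h b a,
      image_eq_zero_of_notMem_tsupport ha, Pi.zero_apply]
  have hc : HasCompactSupport fun s => deriv f s ^ 2 :=
    hfc.deriv.comp_left (g := fun y : ℝ => y ^ 2) (by simp)
  exact ((hf.continuous_deriv le_rfl).pow 2).integral_pos_of_hasCompactSupport_nonneg_nonzero hc
    (fun _ => sq_nonneg _) (pow_ne_zero 2 hs)

theorem memLp_deriv_of_hasCompactSupport (hf : ContDiff ℝ 1 f) (hfc : HasCompactSupport f)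
    (p : ENNReal) : MemLp (deriv f) p :=
  (hf.continuous_deriv le_rfl).memLp_of_hasCompactSupport hfc.deriv

theorem secondVariation_separated_one_neg (hf : ContDiff ℝ 1 f) (hfc : HasCompactSupport f)
    (hf0 : f ≠ 0) : secondVariation (separated f 1) < 0 := by
  rw [secondVariation_separated_one (hf.differentiable one_ne_zero)
    (hf.continuous.memLp_of_hasCompactSupport hfc) (memLp_deriv_of_hasCompactSupport hf hfc 2)]
  have h_deriv := integral_deriv_sq_pos hf hfc hf0
  exact neg_neg_of_pos (by positivity)

theorem secondVariation_separated_cos_pos (hf : ContDiff ℝ 1 f) (hfc : HasCompactSupport f)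
    (hf0 : f ≠ 0) : 0 < secondVariation (separated f cos) := by
  rw [secondVariation_separated_cos (hf.differentiable one_ne_zero)
    (hf.continuous.memLp_of_hasCompactSupport hfc) (memLp_deriv_of_hasCompactSupport hf hfc 2)]
  have h_deriv := integral_deriv_sq_pos hf hfc hf0
  positivity

end Separated

/-- the functional
`D′(u) = ∫_{ℝ×[0,2π]} (4(∂ₛ∂ₜu)² − 2(∂ₛu)² + 2(∂ₜu)²)` is indefinite on smooth functions
that are `2π`-periodic in the second variable and compactly supported in the first
(H-instability w.r.t. `G′` of the tube congruence over an unbounded geodesic of `dS³`). -/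
theorem tube_congruence_deSitter_G'_unstable :
    ∃ u v : ℝ × ℝ → ℝ, ContDiff ℝ (⊤ : ℕ∞) u ∧ ContDiff ℝ (⊤ : ℕ∞) v ∧
      (∀ x : ℝ × ℝ, u (x.1, x.2 + 2 * π) = u x) ∧
      (∀ x : ℝ × ℝ, v (x.1, x.2 + 2 * π) = v x) ∧
      (∃ K : Set ℝ, IsCompact K ∧ ∀ x : ℝ × ℝ, x.1 ∉ K → u x = 0) ∧
      (∃ K : Set ℝ, IsCompact K ∧ ∀ x : ℝ × ℝ, x.1 ∉ K → v x = 0) ∧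
      0 < (∫ x in (Set.univ ×ˢ Set.Icc (0 : ℝ) (2 * π) : Set (ℝ × ℝ)),
            (4 * (pdS (pdT u) x) ^ 2 - 2 * (pdS u x) ^ 2 + 2 * (pdT u x) ^ 2)) ∧
      (∫ x in (Set.univ ×ˢ Set.Icc (0 : ℝ) (2 * π) : Set (ℝ × ℝ)),
            (4 * (pdS (pdT v) x) ^ 2 - 2 * (pdS v x) ^ 2 + 2 * (pdT v x) ^ 2)) < 0 := by
  let φ : ContDiffBump (0 : ℝ) := default
  have hφ0 : (φ : ℝ → ℝ) ≠ 0 := fun h =>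
    (φ.pos_of_mem_ball (Metric.mem_ball_self φ.rOut_pos)).ne' (congrFun h 0)
  have h_cos : IsTestFunction (separated φ cos) :=
    isTestFunction_separated φ.contDiff φ.hasCompactSupport contDiff_cos cos_periodic
  have h_one : IsTestFunction (separated φ 1) :=
    isTestFunction_separated φ.contDiff φ.hasCompactSupport contDiff_const fun _ => rfl
  exact ⟨separated φ cos, separated φ 1, h_cos.contDiff, h_one.contDiff, h_cos.periodic,
    h_one.periodic, h_cos.exists_isCompact, h_one.exists_isCompact,
    secondVariation_separated_cos_pos φ.contDiff φ.hasCompactSupport hφ0,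
    secondVariation_separated_one_neg φ.contDiff φ.hasCompactSupport hφ0⟩
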